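/- In the monoid Q associated to the game 0.26, for all heap sizes k ≤ k' one has Φ(H_k)·Φ(H_{k'}) = a^{g(H_k)} · b^{t(H_k)} · Φ(H_{k'}), where g(H_k) = (k-1) mod 4. -/

import Mathlib

/-!
Every heap value has the form `a^ε b^δ` (`k ≤ 8`) or `a^ε b^δ c_n` (`k ≥ 9`), with `ε, δ ∈ {0, 1}`.
For `k ≤ 8` the value of `H_k` is exactly `a^g b^t`, so nothing has to be shown. For `k ≥ 9` write
`Φ(H_k) = a^ε b^δ c_n`; then `t(H_k) = δ + n + 2` and `ε ≡ g(H_k) (mod 2)`, so the claim says that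
`c_n` acts on `Φ(H_k')` as multiplication by `b^(n+2)`. If `Φ(H_k')` involves `c_m` with `n ≤ m`,
this is the relation `c_n c_m = b^(n+2) c_m`. The only other possibility is `k` odd, `k' = k + 1`,
where `Φ(H_k') = a b c_(n-1)`; there both sides reduce to a power of `b`
(`qc_succ_mul_qb_mul_qc`).
-/

/-- Generators of the misère quotient of 0.26: `a`, `b`, and `c n` for `n : ℕ`. -/
inductive Gen026 where
  | a : Gen026
  | b : Gen026
  | c : ℕ → Gen026

/-- The free commutative monoid on the generators, written multiplicatively. -/
abbrev FM026 := Multiplicative (Multiset Gen026)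

/-- The generator `x` as an element of the free commutative monoid. -/
def fgen026 (x : Gen026) : FM026 := Multiplicative.ofAdd {x}

def fa : FM026 := fgen026 .a
def fb : FM026 := fgen026 .b
def fc (n : ℕ) : FM026 := fgen026 (.c n)

/-- The defining relations of the quotient `Q`:
`a² = 1`, `b^(n+1) c_n = b^(2n+3)`, and `c_m c_n = b^(m+2) c_n` for `m ≤ n`. -/
def rel026 : FM026 → FM026 → Prop := fun x y =>
  (x = fa ^ 2 ∧ y = 1) ∨
  (∃ n : ℕ, x = fb ^ (n + 1) * fc n ∧ y = fb ^ (2 * n + 3)) ∨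
  (∃ m n : ℕ, m ≤ n ∧ x = fc m * fc n ∧ y = fb ^ (m + 2) * fc n)

/-- The commutative monoid `Q` presented by generators `a`, `b`, `c_n` and the
relations `rel026`. -/
def Q026 : Type := (conGen rel026).Quotient

instance : CommMonoid Q026 := Con.commMonoid _

/-- The image of `a` in `Q`. -/
def qa : Q026 := (conGen rel026).mk' fa
/-- The image of `b` in `Q`. -/
def qb : Q026 := (conGen rel026).mk' fb
/-- The image of `c_n` in `Q`. -/
def qc (n : ℕ) : Q026 := (conGen rel026).mk' (fc n)

/-- The P-portion `P = {a} ∪ {b^(2m) : m ≥ 1} ∪ {b^m c_n : m ≤ n, m + n odd}`. -/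
def P026 : Set Q026 :=
  {x | x = qa} ∪
  {x | ∃ m : ℕ, 1 ≤ m ∧ x = qb ^ (2 * m)} ∪
  {x | ∃ m n : ℕ, m ≤ n ∧ (m + n) % 2 = 1 ∧ x = qb ^ m * qc n}

/-- The pretending function on single heaps. -/
noncomputable def phi026 (k : ℕ) : Q026 :=
  if k ≤ 8 then
    (if k % 4 = 1 then 1 else if k % 4 = 2 then qa
     else if k % 4 = 3 then qb else qa * qb)
  else if k = 9 then qc 0
  else if k = 10 then qa * qc 0
  else if k % 2 = 1 then qc ((k - 9) / 2)
  else qa * qb * qc ((k - 12) / 2)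

/-- The pretending function extended multiplicatively to positions. -/
noncomputable def Phi026 (G : Multiset ℕ) : Q026 := (G.map phi026).prod

/-- The function `t` on single heaps for 0.26. -/
def t026 (k : ℕ) : ℕ :=
  if k ≤ 2 then 0 else if k ≤ 4 then 1 else (k - 5) / 2

lemma qa_sq : qa ^ 2 = 1 :=
  (Con.eq (conGen rel026)).2 (ConGen.Rel.of _ _ (Or.inl ⟨rfl, rfl⟩))

lemma qb_pow_mul_qc (n : ℕ) : qb ^ (n + 1) * qc n = qb ^ (2 * n + 3) :=
  (Con.eq (conGen rel026)).2 (ConGen.Rel.of _ _ (Or.inr (Or.inl ⟨n, rfl, rfl⟩)))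

lemma qc_mul_qc {m n : ℕ} (h : m ≤ n) : qc m * qc n = qb ^ (m + 2) * qc n :=
  (Con.eq (conGen rel026)).2 (ConGen.Rel.of _ _ (Or.inr (Or.inr ⟨m, n, h, rfl, rfl⟩)))

/-- The factor `c_(n+1)` acts as `b^(n+3)` on `b c_n`, although its index exceeds `n`:
both sides equal `b^(2n+6)`. -/
lemma qc_succ_mul_qb_mul_qc (n : ℕ) :
    qc (n + 1) * (qb * qc n) = qb ^ (n + 3) * (qb * qc n) := by
  calc qc (n + 1) * (qb * qc n) = qb * (qc n * qc (n + 1)) := by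
        rw [mul_left_comm, mul_comm (qc (n + 1))]
    _ = qb * (qb ^ (n + 2) * qc (n + 1)) := by rw [qc_mul_qc (Nat.le_succ n)]
    _ = qb * qb ^ (2 * (n + 1) + 3) := by rw [← qb_pow_mul_qc (n + 1)]
    _ = qb ^ 3 * qb ^ (2 * n + 3) := by rw [← pow_succ', ← pow_add]; congr 1; omega
    _ = qb ^ 3 * (qb ^ (n + 1) * qc n) := by rw [qb_pow_mul_qc]
    _ = qb ^ (n + 3) * (qb * qc n) := by
        rw [← mul_assoc, ← mul_assoc, ← pow_add, ← pow_succ]; congr 2; omega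

lemma qa_pow_even {g : ℕ} (h : g % 2 = 0) : qa ^ g = 1 := by
  rw [← Nat.div_add_mod g 2, h, add_zero, pow_mul, qa_sq, one_pow]

lemma qa_pow_odd {g : ℕ} (h : g % 2 = 1) : qa ^ g = qa := by
  rw [← Nat.div_add_mod g 2, h, pow_succ, pow_mul, qa_sq, one_pow, one_mul]

lemma phi026_small {k : ℕ} (h1 : 1 ≤ k) (h8 : k ≤ 8) :
    phi026 k = qa ^ ((k - 1) % 4) * qb ^ t026 k := by
  have h2 : qa ^ 2 = 1 := qa_sq
  have h3 : qa ^ 3 = qa := qa_pow_odd rfl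
  interval_cases k <;> simp [phi026, t026, h2, h3]

lemma phi026_odd {k : ℕ} (h : 9 ≤ k) (hk : k % 2 = 1) : phi026 k = qc ((k - 9) / 2) := by
  rcases eq_or_ne k 9 with rfl | h9
  · simp [phi026]
  · have h8 : ¬ k ≤ 8 := by omega
    have h10 : k ≠ 10 := by omega
    simp [phi026, h8, h9, h10, hk]

lemma phi026_ten : phi026 10 = qa * qc 0 := by simp [phi026]

lemma phi026_even {k : ℕ} (h : 12 ≤ k) (hk : k % 2 = 0) :
    phi026 k = qa * qb * qc ((k - 12) / 2) := by
  have h8 : ¬ k ≤ 8 := by omega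
  have h9 : k ≠ 9 := by omega
  have h10 : k ≠ 10 := by omega
  simp [phi026, h8, h9, h10, hk]

/-- The factor `c_n` acts as `b^(n+2)` on the value of every heap of size at least `2n + 9`,
the size of the odd heap with value `c_n`. -/
lemma qc_mul_phi026 {n k : ℕ} (h : 2 * n + 9 ≤ k) :
    qc n * phi026 k = qb ^ (n + 2) * phi026 k := by
  rcases Nat.mod_two_eq_zero_or_one k with hk | hk
  · rcases eq_or_ne k 10 with rfl | h10
    · obtain rfl : n = 0 := by omega
      rw [phi026_ten, mul_left_comm, qc_mul_qc le_rfl, mul_left_comm]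
    · rw [phi026_even (by omega) hk, mul_assoc, mul_left_comm, mul_left_comm (qb ^ (n + 2))]
      congr 1
      by_cases hn : n ≤ (k - 12) / 2
      · rw [mul_left_comm, qc_mul_qc hn, mul_left_comm]
      · -- Here `k = 2n + 10`, and the index occurring in the value of the heap is `n - 1`.
        obtain rfl : n = (k - 12) / 2 + 1 := by omega
        exact qc_succ_mul_qb_mul_qc _
  · rw [phi026_odd (by omega) hk, qc_mul_qc (by omega)]

/-- For heap sizes `1 ≤ k ≤ k'`, one has
`Φ(H_k) Φ(H_k') = a^(g(H_k)) b^(t(H_k)) Φ(H_k')`, where `g(H_k) = (k-1) % 4`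
is the Grundy value of a single heap in 0.26. -/
theorem phi026_two_heaps :
    ∀ k k' : ℕ, 1 ≤ k → k ≤ k' →
      phi026 k * phi026 k' = qa ^ ((k - 1) % 4) * qb ^ t026 k * phi026 k' := by
  intro k k' h1 hkk'
  rcases Nat.lt_or_ge 8 k with h9 | h8
  · rcases Nat.mod_two_eq_zero_or_one k with hk | hk
    · rw [qa_pow_odd (by omega)]
      rcases eq_or_ne k 10 with rfl | h10
      · rw [phi026_ten, mul_assoc, qc_mul_phi026 (by omega), ← mul_assoc]
        rfl
      · have ht : t026 k = (k - 12) / 2 + 2 + 1 := by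
          unfold t026
          split_ifs <;> omega
        rw [phi026_even (by omega) hk, mul_assoc, qc_mul_phi026 (by omega), ht,
          pow_succ' qb ((k - 12) / 2 + 2),
          ← mul_assoc, ← mul_assoc]
    · have ht : t026 k = (k - 9) / 2 + 2 := by
        unfold t026
        split_ifs <;> omega
      rw [qa_pow_even (by omega), one_mul, phi026_odd (by omega) hk,
        qc_mul_phi026 (by omega), ht]
  · rw [phi026_small h1 h8]
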